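/- Let f be a non-degenerate alternating form on F_q^{2n} and v_f the 0/1 indicator of symplectic chambers. Then for every 1-dimensional subspace P and every i ∈ {1,...,n}, v_fᵀ χ^i_P = 0, where χ^i_P(C) = q^i if P ≤ C_n and P ≰ C_{n-i}, -1 if P ≤ C_{n+i} and P ≰ C_n, and 0 otherwise. -/

import Mathlib

/-!
The symplectic group acts transitively on nonzero vectors: symplectic transvections move `u` to `v`
whenever `B u v ≠ 0`, and any two nonzero vectors have a common neighbour for the relation
`B u v ≠ 0`. Since the group permutes the symplectic chambers, the value of the sum at `P = ⟨v⟩` does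
not depend on `v ≠ 0` (`sympSum_isometry`, `sympSum_eq`). On the other hand, for each single
chamber `C` the sum over all vectors `v` of the value of `χ^i` at `⟨v⟩` is
`q^i (q^n - q^(n-i)) - (q^(n+i) - q^n) = 0` (`sum_chi`). Summing over all vectors therefore shows that
`(|V| - 1)` times the required sum vanishes.
-/

open Module Finset
open scoped Classical

/-- A chamber of a `c`-dimensional vector space, encoded as an increasing chain
`f : ℕ → Submodule K V` with `finrank (f i) = i` for `i ≤ c` and `f i = ⊤` for `i ≥ c`. -/
def IsChamber (K : Type*) {V : Type*} [Field K] [AddCommGroup V] [Module K V]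
    (c : ℕ) (f : ℕ → Submodule K V) : Prop :=
  Monotone f ∧ (∀ i ≤ c, Module.finrank K (f i) = i) ∧ ∀ i, c ≤ i → f i = ⊤

/-- The type of chambers of `V`, `dim V = c`. -/
abbrev Chamber (K V : Type*) [Field K] [AddCommGroup V] [Module K V] (c : ℕ) :=
  {f : ℕ → Submodule K V // IsChamber K c f}

/-- Two chambers are opposite if `C_i ∩ D_{c-i} = 0` for `1 ≤ i ≤ c - 1`. -/
def OppositeChambers (K : Type*) {V : Type*} [Field K] [AddCommGroup V] [Module K V]
    (c : ℕ) (f g : ℕ → Submodule K V) : Prop :=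
  ∀ i, 1 ≤ i → i ≤ c - 1 → f i ⊓ g (c - i) = ⊥

/-- `z_c(q) = ∏_{i=1}^c (q^i - 1) / (q-1)`, the number of chambers of `𝔽_q^c`. -/
def zNat (q c : ℕ) : ℕ := (∏ i ∈ Finset.Icc 1 c, (q ^ i - 1)) / (q - 1) ^ c

/-- The Gaussian binomial coefficient `[b choose a]_q`. -/
def gaussNat (q b a : ℕ) : ℕ :=
  (∏ i ∈ Finset.Icc 1 a, (q ^ (b - a + i) - 1)) / ∏ i ∈ Finset.Icc 1 a, (q ^ i - 1)

section

variable {K V : Type*} [Field K] [AddCommGroup V] [Module K V]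

/-- The chain `C` is symplectic with respect to the polarity `perp` of `B`. -/
def SympPred (B : V →ₗ[K] V →ₗ[K] K) (perp : Submodule K V → Submodule K V) (n : ℕ)
    (C : ℕ → Submodule K V) : Prop :=
  (∀ x ∈ C n, ∀ y ∈ C n, B x y = 0) ∧ (∀ j, 1 ≤ j → j ≤ n → C (2 * n - j) = perp (C j))

/-- The value of `χ^i_P` at `C` for `P` spanned by `v`; it is `0` when `v = 0`. -/
noncomputable def chi (q n i : ℕ) (C : ℕ → Submodule K V) (v : V) : ℚ :=
  if v ∈ C n ∧ v ∉ C (n - i) then (q : ℚ) ^ i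
    else if v ∈ C (n + i) ∧ v ∉ C n then -1 else 0

/-- The pairing of the symplectic indicator with `χ^i` at the span of `v`. -/
noncomputable def sympSum (B : V →ₗ[K] V →ₗ[K] K) (perp : Submodule K V → Submodule K V) (q n i : ℕ)
    [Fintype (Chamber K V (2 * n))] (v : V) : ℚ :=
  ∑ C : Chamber K V (2 * n), (if SympPred B perp n C.1 then (1 : ℚ) else 0) * chi q n i C.1 v

lemma sum_mem_eq [Fintype K] [Fintype V] [FiniteDimensional K V] (W : Submodule K V) :
    ∑ v : V, (if v ∈ W then (1 : ℚ) else 0) = (Fintype.card K : ℚ) ^ finrank K W := by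
  rw [Finset.sum_boole, ← Fintype.card_subtype, ← Nat.cast_pow]
  congr 1
  exact Module.card_eq_pow_finrank (K := K) (V := W)

lemma sum_chi [Fintype K] [Fintype V] [FiniteDimensional K V] (n i : ℕ) (hin : i ≤ n)
    (C : Chamber K V (2 * n)) : ∑ v : V, chi (Fintype.card K) n i C.1 v = 0 := by
  obtain ⟨C, hm, hd, -⟩ := C
  have key : ∀ v : V, chi (Fintype.card K) n i C v =
      (Fintype.card K : ℚ) ^ i * ((if v ∈ C n then (1 : ℚ) else 0)
        - (if v ∈ C (n - i) then (1 : ℚ) else 0))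
      - ((if v ∈ C (n + i) then (1 : ℚ) else 0) - (if v ∈ C n then (1 : ℚ) else 0)) := by
    intro v
    have h1 : v ∈ C (n - i) → v ∈ C n := fun h => hm (Nat.sub_le n i) h
    have h2 : v ∈ C n → v ∈ C (n + i) := fun h => hm (Nat.le_add_right n i) h
    unfold chi
    by_cases a : v ∈ C n <;> by_cases b : v ∈ C (n - i) <;> by_cases c : v ∈ C (n + i) <;>
      simp_all
  simp only [key, Finset.sum_sub_distrib, ← Finset.mul_sum, sum_mem_eq]
  rw [hd n (by omega), hd (n - i) (by omega), hd (n + i) (by omega), mul_sub, ← pow_add, ← pow_add,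
    Nat.add_sub_cancel' hin, Nat.add_comm i n]
  ring

lemma isChamber_map {c : ℕ} {C : ℕ → Submodule K V} (hC : IsChamber K c C) (T : V ≃ₗ[K] V) :
    IsChamber K c (fun k => (C k).map (T : V →ₗ[K] V)) := by
  obtain ⟨hm, hd, ht⟩ := hC
  refine ⟨fun a b h => Submodule.map_mono (hm h), fun k hk => ?_, fun k hk => ?_⟩
  · exact (LinearEquiv.finrank_map_eq T (C k)).trans (hd k hk)
  · simp [ht k hk]

/-- The action of a linear automorphism on chambers. -/
def chamberEquiv (c : ℕ) (T : V ≃ₗ[K] V) : Chamber K V c ≃ Chamber K V c where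
  toFun C := ⟨_, isChamber_map C.2 T⟩
  invFun C := ⟨_, isChamber_map C.2 T.symm⟩
  left_inv C := by
    apply Subtype.ext; funext k; ext x
    simp
  right_inv C := by
    apply Subtype.ext; funext k; ext x
    simp

lemma mem_map_iff (T : V ≃ₗ[K] V) (W : Submodule K V) (x : V) :
    T x ∈ W.map (T : V →ₗ[K] V) ↔ x ∈ W := by
  simp

lemma sympPred_map (B : V →ₗ[K] V →ₗ[K] K) (perp : Submodule K V → Submodule K V)
    (hperp : ∀ W x, x ∈ perp W ↔ ∀ y ∈ W, B x y = 0) (n : ℕ) (T : V ≃ₗ[K] V)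
    (hT : ∀ x y, B (T x) (T y) = B x y) (C : ℕ → Submodule K V) :
    SympPred B perp n (fun k => (C k).map (T : V →ₗ[K] V)) ↔ SympPred B perp n C := by
  have hp : ∀ W : Submodule K V, perp (W.map (T : V →ₗ[K] V)) = (perp W).map (T : V →ₗ[K] V) := by
    intro W
    ext x
    obtain ⟨x, rfl⟩ := T.surjective x
    rw [mem_map_iff, hperp, hperp]
    refine ⟨fun h y hy => ?_, ?_⟩
    · rw [← hT]; exact h _ ((mem_map_iff T W y).2 hy)
    · rintro h _ ⟨y, hy, rfl⟩
      exact (hT x y).trans (h y hy)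
  unfold SympPred
  refine and_congr ⟨fun h x hx y hy => ?_, ?_⟩ ?_
  · rw [← hT]; exact h _ ((mem_map_iff T _ x).2 hx) _ ((mem_map_iff T _ y).2 hy)
  · rintro h _ ⟨x, hx, rfl⟩ _ ⟨y, hy, rfl⟩
    exact (hT x y).trans (h x hx y hy)
  · simp only [hp, (Submodule.map_injective_of_injective
      (f := (T : V →ₗ[K] V)) T.injective).eq_iff]

lemma sympSum_isometry (q n i : ℕ) [Fintype (Chamber K V (2 * n))] (B : V →ₗ[K] V →ₗ[K] K)
    (perp : Submodule K V → Submodule K V)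
    (hperp : ∀ W x, x ∈ perp W ↔ ∀ y ∈ W, B x y = 0) (T : V ≃ₗ[K] V)
    (hT : ∀ x y, B (T x) (T y) = B x y) (v : V) :
    sympSum B perp q n i (T v) = sympSum B perp q n i v := by
  unfold sympSum
  refine (Fintype.sum_equiv (chamberEquiv (2 * n) T) _ _ fun C => ?_).symm
  have h1 := sympPred_map B perp hperp n T hT C.1
  have h2 : chi q n i (chamberEquiv (2 * n) T C).1 (T v) = chi q n i C.1 v := by
    simp only [chi, chamberEquiv, Equiv.coe_fn_mk, mem_map_iff]
  rw [h2]
  congr 1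
  exact (if_congr h1 rfl rfl).symm

/-- A symplectic transvection takes `u` to `v` when `B u v ≠ 0`. -/
lemma exists_isometry (B : V →ₗ[K] V →ₗ[K] K) (hBalt : ∀ x, B x x = 0) (u v : V)
    (h : B u v ≠ 0) : ∃ T : V ≃ₗ[K] V, (∀ x y, B (T x) (T y) = B x y) ∧ T u = v := by
  have hsk : ∀ x y, B x y = - B y x := by
    intro x y
    have := hBalt (x + y)
    simp only [map_add, LinearMap.add_apply, hBalt] at this
    linear_combination this
  -- The transvection `x ↦ x + a B(x, w) w` along `w = v - u`, with inverse given by `-a`.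
  let t : K → V →ₗ[K] V := fun a => LinearMap.id + (a • B.flip (v - u)).smulRight (v - u)
  have ht : ∀ a x, t a x = x + (a * B x (v - u)) • (v - u) := fun a x => rfl
  have hc : ∀ a b, a + b = 0 → (t a).comp (t b) = LinearMap.id := by
    intro a b hab
    ext x
    have hz : B (t b x) (v - u) = B x (v - u) := by
      rw [ht, map_add, LinearMap.add_apply, map_smul, LinearMap.smul_apply, hBalt, smul_zero,
        add_zero]
    rw [LinearMap.comp_apply, ht, hz, ht, add_assoc, ← add_smul, ← add_mul, add_comm b a, hab]
    simp
  refine ⟨LinearEquiv.ofLinearMap (t (B u v)⁻¹) (t (-(B u v)⁻¹)) (hc _ _ (by ring))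
    (hc _ _ (by ring)), fun x y => ?_, ?_⟩
  · rw [LinearEquiv.coe_ofLinearMap, ht, ht]
    simp only [map_add, LinearMap.add_apply, map_smul, LinearMap.smul_apply, hBalt, smul_eq_mul]
    rw [hsk (v - u) y]
    ring
  · rw [LinearEquiv.coe_ofLinearMap, ht, map_sub, hBalt, sub_zero, inv_mul_cancel₀ h, one_smul]
    abel

lemma sympSum_eq (q n i : ℕ) [Fintype (Chamber K V (2 * n))] (B : V →ₗ[K] V →ₗ[K] K)
    (hBalt : ∀ x, B x x = 0) (hBnd : ∀ x, (∀ y, B x y = 0) → x = 0)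
    (perp : Submodule K V → Submodule K V)
    (hperp : ∀ W x, x ∈ perp W ↔ ∀ y ∈ W, B x y = 0) (u v : V) (hu : u ≠ 0) (hv : v ≠ 0) :
    sympSum B perp q n i u = sympSum B perp q n i v := by
  have step : ∀ u v, B u v ≠ 0 → sympSum B perp q n i u = sympSum B perp q n i v := by
    intro u v h
    obtain ⟨T, hT, rfl⟩ := exists_isometry B hBalt u v h
    exact (sympSum_isometry q n i B perp hperp T hT u).symm
  obtain ⟨y, hy⟩ : ∃ y, B u y ≠ 0 := by
    by_contra! h; exact hu (hBnd u h)
  obtain ⟨z, hz⟩ : ∃ z, B v z ≠ 0 := by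
    by_contra! h; exact hv (hBnd v h)
  -- One of `y`, `z`, `y + z` is orthogonal to neither `u` nor `v`.
  obtain ⟨w, hw1, hw2⟩ : ∃ w, B u w ≠ 0 ∧ B v w ≠ 0 := by
    by_cases h1 : B v y = 0
    · by_cases h2 : B u z = 0
      · exact ⟨y + z, by simpa [h2] using hy, by simpa [h1] using hz⟩
      · exact ⟨z, h2, hz⟩
    · exact ⟨y, hy, h1⟩
  exact (step u w hw1).trans (step v w hw2).symm

end

/-- the indicator of symplectic chambers (for a non-degenerate alternating
form on `𝔽_q^{2n}`) is orthogonal to every `χ^i_P`. -/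
theorem symplectic_antidesign (q n : ℕ) (hn : 1 ≤ n) (K V : Type*) [Field K] [Fintype K]
    [AddCommGroup V] [Module K V] [FiniteDimensional K V]
    (hK : Fintype.card K = q) (hV : Module.finrank K V = 2 * n)
    [Fintype (Chamber K V (2 * n))]
    (B : V →ₗ[K] V →ₗ[K] K) (hBalt : ∀ x, B x x = 0)
    (hBnd : ∀ x, (∀ y, B x y = 0) → x = 0)
    (perp : Submodule K V → Submodule K V)
    (hperp : ∀ W x, x ∈ perp W ↔ ∀ y ∈ W, B x y = 0)
    (P : Submodule K V) (hP : Module.finrank K P = 1)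
    (i : ℕ) (hi1 : 1 ≤ i) (hin : i ≤ n) :
    ∑ C : Chamber K V (2 * n),
        (if (∀ x ∈ C.1 n, ∀ y ∈ C.1 n, B x y = 0) ∧
            (∀ j, 1 ≤ j → j ≤ n → C.1 (2 * n - j) = perp (C.1 j)) then (1 : ℚ) else 0) *
          (if P ≤ C.1 n ∧ ¬ P ≤ C.1 (n - i) then (q : ℚ) ^ i
            else if P ≤ C.1 (n + i) ∧ ¬ P ≤ C.1 n then -1 else 0) = 0 := by
  subst hK
  have : Finite V := Module.finite_of_finite K
  have : Fintype V := Fintype.ofFinite V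
  obtain ⟨⟨v, hvP⟩, hv0, hv⟩ := finrank_eq_one_iff'.1 hP
  have hv0 : v ≠ 0 := fun h => hv0 (Subtype.ext h)
  have hle : ∀ W : Submodule K V, P ≤ W ↔ v ∈ W := by
    refine fun W => ⟨fun h => h hvP, fun h x hx => ?_⟩
    obtain ⟨c, hc⟩ := hv ⟨x, hx⟩
    have hc : c • v = x := congrArg Subtype.val hc
    exact hc ▸ W.smul_mem c h
  suffices h : sympSum B perp (Fintype.card K) n i v = 0 by
    refine Eq.trans ?_ h
    refine Finset.sum_congr rfl fun C _ => ?_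
    -- The indicator in the statement carries a different decidability instance from `sympSum`.
    have hs : ∀ (p : Prop) (d e : Decidable p),
        @ite ℚ p d 1 0 = @ite ℚ p e 1 0 := fun p d e => by congr!
    exact congrArg₂ (· * ·) (hs _ _ _)
      (if_congr (by rw [hle, hle]) rfl (if_congr (by rw [hle, hle]) rfl rfl))
  have htot : ∑ u : V, sympSum B perp (Fintype.card K) n i u = 0 := by
    unfold sympSum
    rw [Finset.sum_comm]
    refine Finset.sum_eq_zero fun C _ => ?_
    rw [← Finset.mul_sum, sum_chi n i hin C, mul_zero]
  have h0 : sympSum B perp (Fintype.card K) n i (0 : V) = 0 := by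
    simp [sympSum, chi]
  rw [← Finset.add_sum_erase _ _ (Finset.mem_univ (0 : V)), h0, zero_add,
    Finset.sum_congr rfl (fun u hu => sympSum_eq (Fintype.card K) n i B hBalt hBnd perp hperp u v
      (Finset.ne_of_mem_erase hu) hv0), Finset.sum_const, smul_eq_zero] at htot
  refine htot.resolve_left fun h => ?_
  rw [Finset.card_eq_zero] at h
  exact Finset.notMem_empty v (h ▸ Finset.mem_erase.2 ⟨hv0, Finset.mem_univ v⟩)
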